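/- arXiv:1907.07346 — 3 statements merged into one kernel-verified Lean document; each statement's English description precedes it below -/
import Mathlib

section
/- Let W ∈ ℝ^{n×n} be a symmetric positive semidefinite matrix all of whose eigenvalues lie in [0,1], and let λ_n(W) denote its smallest eigenvalue. Let m ≥ 1 be an integer and let M_0, …, M_{T−1} ∈ ℝ^{N×n} be arbitrary matrices. Then: Σ_{t=0}^{T−1} ‖ Σ_{s=0}^{t} M_s·(W − I)^m·W^{t−s} ‖_F² ≤ (1 − λ_n(W))^{2m−2} · Σ_{t=0}^{T−1} ‖M_t‖_F². -/
/-!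
Diagonalise `W = U D Uᵀ` with `U` orthogonal. Right multiplication by `U` preserves `frobSq`
(`frobSq_mul_orthogonal`) and turns the matrix convolution into independent scalar convolutions,
one for each entry `(k, i)`, with kernel `(d - 1) ^ m * d ^ j` where `d` is the `i`-th eigenvalue.
Writing `z` for the convolution of the scalar input `a` with `d ^ j`, we have
`z (t + 1) = d * z t + a t`, and the identity
`a² + (1 - d) d z² - (1 - d) (d z + a)² = d (a - (1 - d) z)²`
shows that `(1 - d) d z²` is a storage function, so the `ℓ²` gain of `(1 - d) z` is at most one
(`sum_conv_sq_le`). The remaining factor `(1 - d) ^ (2m - 2)` is largest at the smallest eigenvalue.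
-/


noncomputable section

/-- Squared Frobenius norm of a real matrix. -/
def frobSq {N n : ℕ} (A : Matrix (Fin N) (Fin n) ℝ) : ℝ := ∑ k, ∑ i, A k i ^ 2

/-- Smallest eigenvalue of a symmetric real matrix. -/
def smallestEigenvalue {n : ℕ} [NeZero n] {W : Matrix (Fin n) (Fin n) ℝ}
    (hW : W.IsHermitian) : ℝ :=
  Finset.univ.inf' Finset.univ_nonempty hW.eigenvalues

/-- The squared Frobenius norm is invariant under right multiplication by an orthogonal matrix. -/
lemma frobSq_mul_orthogonal {N n : ℕ} (A : Matrix (Fin N) (Fin n) ℝ)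
    (U : Matrix (Fin n) (Fin n) ℝ) (hU : U * U.transpose = 1) :
    frobSq (A * U) = frobSq A := by
  have h : ∀ B : Matrix (Fin N) (Fin n) ℝ, frobSq B = (B * B.transpose).trace := by
    intro B
    simp [frobSq, Matrix.trace, Matrix.mul_apply, sq]
  rw [h, h, Matrix.transpose_mul, Matrix.mul_assoc, ← Matrix.mul_assoc U, hU, Matrix.one_mul]

/-- Convolution with `d ^ j` in recursive form. -/
lemma conv_succ (d : ℝ) (a : ℕ → ℝ) (t : ℕ) :
    ∑ s ∈ Finset.range (t + 2), a s * d ^ (t + 1 - s)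
      = d * ∑ s ∈ Finset.range (t + 1), a s * d ^ (t - s) + a (t + 1) := by
  rw [Finset.sum_range_succ, Finset.mul_sum]
  congr 1
  · refine Finset.sum_congr rfl fun s hs => ?_
    have hs' : s ≤ t := Nat.lt_succ_iff.mp (Finset.mem_range.mp hs)
    rw [Nat.succ_sub hs', pow_succ]
    ring
  · simp

/-- The convolution operator with kernel `(1 - d) * d ^ j` is a contraction of `ℓ²`. -/
lemma sum_conv_sq_le (d : ℝ) (h0 : 0 ≤ d) (h1 : d ≤ 1) (a : ℕ → ℝ) (T : ℕ) :
    ∑ t ∈ Finset.range T, ((1 - d) * ∑ s ∈ Finset.range (t + 1), a s * d ^ (t - s)) ^ 2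
      ≤ ∑ t ∈ Finset.range T, a t ^ 2 := by
  -- Strengthened by the nonnegative storage term `(1 - d) * d * z ^ 2` to make induction work.
  have key : ∀ T : ℕ,
      ∑ t ∈ Finset.range (T + 1), ((1 - d) * ∑ s ∈ Finset.range (t + 1), a s * d ^ (t - s)) ^ 2
        + (1 - d) * d * (∑ s ∈ Finset.range (T + 1), a s * d ^ (T - s)) ^ 2
      ≤ ∑ t ∈ Finset.range (T + 1), a t ^ 2 := by
    intro T
    induction T with
    | zero =>
      simp only [zero_add, Finset.sum_range_one, Nat.sub_zero, pow_zero, mul_one]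
      nlinarith [mul_nonneg h0 (sq_nonneg (a 0))]
    | succ T ih =>
      rw [Finset.sum_range_succ, Finset.sum_range_succ (fun t => a t ^ 2), conv_succ]
      set z := ∑ s ∈ Finset.range (T + 1), a s * d ^ (T - s)
      have hd := mul_nonneg h0 (sq_nonneg (a (T + 1) - (1 - d) * z))
      linear_combination ih + hd
  cases T with
  | zero => simp
  | succ T =>
    have hs := mul_nonneg (mul_nonneg (sub_nonneg.mpr h1) h0)
      (sq_nonneg (∑ s ∈ Finset.range (T + 1), a s * d ^ (T - s)))
    linarith [key T]

lemma sum_conv_pow_sq_le (d l : ℝ) (h0 : 0 ≤ d) (h1 : d ≤ 1) (hl : l ≤ d) (m : ℕ) (hm : 1 ≤ m)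
    (a : ℕ → ℝ) (T : ℕ) :
    ∑ t ∈ Finset.range T, (∑ s ∈ Finset.range (t + 1), a s * (d - 1) ^ m * d ^ (t - s)) ^ 2
      ≤ (1 - l) ^ (2 * m - 2) * ∑ t ∈ Finset.range T, a t ^ 2 := by
  obtain ⟨p, rfl⟩ : ∃ p, m = p + 1 := ⟨m - 1, by omega⟩
  have he : 2 * (p + 1) - 2 = 2 * p := by omega
  rw [he]
  have hfac : ∀ t, (∑ s ∈ Finset.range (t + 1), a s * (d - 1) ^ (p + 1) * d ^ (t - s)) ^ 2
      = (1 - d) ^ (2 * p) *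
        ((1 - d) * ∑ s ∈ Finset.range (t + 1), a s * d ^ (t - s)) ^ 2 := by
    intro t
    have hsum : ∑ s ∈ Finset.range (t + 1), a s * (d - 1) ^ (p + 1) * d ^ (t - s)
        = (d - 1) ^ (p + 1) * ∑ s ∈ Finset.range (t + 1), a s * d ^ (t - s) := by
      rw [Finset.mul_sum]
      exact Finset.sum_congr rfl fun s _ => by ring
    have hsq : (1 - d) ^ (2 * p) = (d - 1) ^ (2 * p) := by
      rw [pow_mul, pow_mul, sub_sq_comm]
    rw [hsum, hsq]
    ring
  rw [Finset.sum_congr rfl fun t _ => hfac t, ← Finset.mul_sum]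
  have hd : 0 ≤ 1 - d := sub_nonneg.mpr h1
  exact mul_le_mul (pow_le_pow_left₀ hd (by linarith) _) (sum_conv_sq_le d h0 h1 a T)
    (Finset.sum_nonneg fun _ _ => sq_nonneg _) (pow_nonneg (by linarith) _)

lemma sum_frobSq {N n : ℕ} (T : ℕ) (A : ℕ → Matrix (Fin N) (Fin n) ℝ) :
    ∑ t ∈ Finset.range T, frobSq (A t)
      = ∑ k, ∑ i, ∑ t ∈ Finset.range T, A t k i ^ 2 := by
  unfold frobSq
  rw [Finset.sum_comm]
  exact Finset.sum_congr rfl fun k _ => Finset.sum_comm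

/-- if `W` is symmetric PSD with all eigenvalues in `[0,1]`, `m ≥ 1`, then
`∑_{t<T} ‖∑_{s≤t} M_s (W-I)^m W^{t-s}‖_F² ≤ (1 - λ_n(W))^{2m-2} ∑_{t<T} ‖M_t‖_F²`. -/
theorem sum_frobSq_pow_bound {N n T : ℕ} [NeZero n]
    (W : Matrix (Fin n) (Fin n) ℝ) (hW : W.IsHermitian) (hpsd : W.PosSemidef)
    (heig : ∀ i, hW.eigenvalues i ∈ Set.Icc (0 : ℝ) 1)
    (m : ℕ) (hm : 1 ≤ m) (M : ℕ → Matrix (Fin N) (Fin n) ℝ) :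
    ∑ t ∈ Finset.range T,
        frobSq (∑ s ∈ Finset.range (t + 1), M s * (W - 1) ^ m * W ^ (t - s))
      ≤ (1 - smallestEigenvalue hW) ^ (2 * m - 2) * ∑ t ∈ Finset.range T, frobSq (M t) := by
  set U : Matrix (Fin n) (Fin n) ℝ := (hW.eigenvectorUnitary : Matrix (Fin n) (Fin n) ℝ) with hUdef
  have hUU : U * U.transpose = 1 := by
    have := Unitary.coe_mul_star_self hW.eigenvectorUnitary
    simpa [Matrix.star_eq_conjTranspose, Matrix.conjTranspose_eq_transpose_of_trivial] using this
  have hUU' : U.transpose * U = 1 := mul_eq_one_comm.mp hUU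
  set d := hW.eigenvalues with hd
  have hWU : W * U = U * Matrix.diagonal d := by
    have h : W = U * Matrix.diagonal d * U.transpose := by
      have := hW.spectral_theorem
      rw [Unitary.conjStarAlgAut_apply] at this
      simpa [Matrix.star_eq_conjTranspose, Matrix.conjTranspose_eq_transpose_of_trivial,
        Function.comp_def] using this
    calc W * U = U * Matrix.diagonal d * U.transpose * U := by rw [← h]
      _ = U * Matrix.diagonal d := by rw [Matrix.mul_assoc, hUU', Matrix.mul_one]
  have hsemi : SemiconjBy U (Matrix.diagonal d) W := hWU.symm
  have hpow : ∀ j, W ^ j * U = U * Matrix.diagonal (fun i => d i ^ j) := by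
    intro j
    rw [← (hsemi.pow_right j).eq, Matrix.diagonal_pow]
    rfl
  have hpow1 : (W - 1) ^ m * U = U * Matrix.diagonal (fun i => (d i - 1) ^ m) := by
    have h := (hsemi.sub_right (SemiconjBy.one_right U)).pow_right m
    rw [← h.eq, ← Matrix.diagonal_one, Matrix.diagonal_sub, Matrix.diagonal_pow]
    rfl
  have hterm : ∀ s j, M s * (W - 1) ^ m * W ^ j * U
      = M s * U * Matrix.diagonal (fun i => (d i - 1) ^ m)
        * Matrix.diagonal (fun i => d i ^ j) := by
    intro s j
    rw [Matrix.mul_assoc, hpow, ← Matrix.mul_assoc, Matrix.mul_assoc (M s), hpow1,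
      ← Matrix.mul_assoc]
  have hentry : ∀ t k i,
      ((∑ s ∈ Finset.range (t + 1), M s * (W - 1) ^ m * W ^ (t - s)) * U :
        Matrix (Fin N) (Fin n) ℝ) k i
        = ∑ s ∈ Finset.range (t + 1), (M s * U) k i * (d i - 1) ^ m * d i ^ (t - s) := by
    intro t k i
    rw [Matrix.sum_mul, Matrix.sum_apply]
    refine Finset.sum_congr rfl fun s _ => ?_
    rw [hterm, Matrix.mul_diagonal, Matrix.mul_diagonal]
  rw [← Finset.sum_congr rfl fun t _ => frobSq_mul_orthogonal _ U hUU,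
    ← Finset.sum_congr rfl fun t _ => frobSq_mul_orthogonal (M t) U hUU,
    sum_frobSq, sum_frobSq, Finset.mul_sum]
  refine Finset.sum_le_sum fun k _ => ?_
  rw [Finset.mul_sum]
  refine Finset.sum_le_sum fun i _ => ?_
  simp only [hentry]
  exact sum_conv_pow_sq_le (d i) _ (heig i).1 (heig i).2
    (Finset.inf'_le _ (Finset.mem_univ i)) m hm (fun s => (M s * U) k i) T
end
end

section
/- Let W ∈ ℝ^{n×n} be symmetric, doubly stochastic (W = Wᵀ, nonnegative entries, W·1 = 1 where 1 is the all-ones vector), and positive semidefinite, with λ_2(W) < 1, where λ_i(M) denotes the i-th largest eigenvalue of a symmetric matrix M. Let A_n = (1/n)·1·1ᵀ and let M_0, …, M_{T−1} ∈ ℝ^{N×n} be arbitrary matrices. Then: Σ_{t=0}^{T−1} ‖ Σ_{s=0}^{t} M_s·(I − A_n)·W^{t−s} ‖_F² ≤ (1/(1 − λ_2(W))²) · Σ_{t=0}^{T−1} ‖M_t‖_F². -/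
/-!
Expand everything in an orthonormal eigenbasis `v` of `W`. Since `W 𝟙 = 𝟙` and all eigenvalues other
than the largest are at most `λ₂(W) < 1`, the vector `𝟙` is orthogonal to every `v j` except the top
one `v i₀`, hence is a multiple of it. So `I - A_n` annihilates `v i₀` and fixes the other `v j`
(`projMean_mulVec`). In the direction `v j`, `j ≠ i₀`, the sum becomes the scalar convolution
`∑_{s ≤ t} m_s r^{t-s}` with `r = λ_j ∈ [0, λ₂(W)]`, whose `ℓ²` norm is at most `(1 - r)⁻¹` times
that of `m` (`sum_sq_geom_conv_le`). By Parseval (`frobSq_eq_sum_eigenvectorBasis`), summing over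
the rows and over `j` gives the bound.
-/

noncomputable section

/-- `k`-th largest eigenvalue (1-indexed, counted with multiplicity) of a symmetric
real matrix, obtained by sorting the eigenvalue tuple in increasing order. -/
def ithLargestEigenvalue {n : ℕ} [NeZero n] {W : Matrix (Fin n) (Fin n) ℝ}
    (hW : W.IsHermitian) (k : ℕ) : ℝ :=
  hW.eigenvalues (Tuple.sort hW.eigenvalues ⟨(n - k) % n, Nat.mod_lt _ (NeZero.pos n)⟩)

/-- Discrete Young inequality for convolution with the geometric kernel `r ^ k`, whose `ℓ¹` norm is
`(1 - r)⁻¹`. -/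
theorem sum_sq_geom_conv_le (r : ℝ) (h0 : 0 ≤ r) (h1 : r < 1) (m : ℕ → ℝ) (T : ℕ) :
    (1 - r) ^ 2 * ∑ t ∈ Finset.range T, (∑ s ∈ Finset.range (t + 1), m s * r ^ (t - s)) ^ 2
      ≤ ∑ t ∈ Finset.range T, m t ^ 2 := by
  -- `b (t + 1)` is the convolution at time `t`; the shift makes the recursion start from `b 0 = 0`.
  set b : ℕ → ℝ := fun t => ∑ s ∈ Finset.range t, m s * r ^ (t - 1 - s) with hb
  have hrec : ∀ t, b (t + 1) = r * b t + m t := by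
    intro t
    simp only [hb, Finset.sum_range_succ, Finset.mul_sum]
    congr 1
    · refine Finset.sum_congr rfl fun s hs => ?_
      have : t + 1 - 1 - s = (t - 1 - s) + 1 := by
        have := Finset.mem_range.1 hs
        omega
      rw [this, pow_succ]
      ring
    · simp
  -- The extra term in `b T` makes the induction close, via the identity
  -- `(1 - r) r b² + m² - (1 - r) (r b + m)² = r ((1 - r) b - m)²`.
  have key : (1 - r) ^ 2 * ∑ t ∈ Finset.range T, b (t + 1) ^ 2 + (1 - r) * r * b T ^ 2
      ≤ ∑ t ∈ Finset.range T, m t ^ 2 := by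
    induction T with
    | zero => simp [hb]
    | succ T ih =>
      rw [Finset.sum_range_succ, Finset.sum_range_succ, hrec T]
      have := mul_nonneg h0 (sq_nonneg ((1 - r) * b T - m T))
      linarith
  have : 0 ≤ (1 - r) * r * b T ^ 2 := by
    have : 0 ≤ 1 - r := by linarith
    positivity
  change (1 - r) ^ 2 * ∑ t ∈ Finset.range T, b (t + 1) ^ 2 ≤ _
  linarith

/-- Parseval: the rows of `A` are expanded in the orthonormal eigenbasis of `W`. -/
theorem frobSq_eq_sum_eigenvectorBasis {N n : ℕ} {W : Matrix (Fin n) (Fin n) ℝ}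
    (hW : W.IsHermitian) (A : Matrix (Fin N) (Fin n) ℝ) :
    frobSq A = ∑ k, ∑ j, (A.mulVec (hW.eigenvectorBasis j).ofLp k) ^ 2 := by
  unfold frobSq
  refine Finset.sum_congr rfl fun k _ => ?_
  have h := hW.eigenvectorBasis.sum_sq_norm_inner_left (WithLp.toLp 2 (A k))
  rw [EuclideanSpace.norm_sq_eq] at h
  simp only [Real.norm_eq_abs, sq_abs] at h
  rw [← h]
  refine Finset.sum_congr rfl fun j _ => ?_
  simp [Matrix.mulVec, dotProduct, PiLp.inner_apply, mul_comm]

/-- All eigenvalues except the one in the last position of the sorted tuple are at most `λ₂`.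
For `n = 1` no such `j` exists, so the wrapped index `(n - 2) % n = 0` plays no role. -/
theorem eigenvalues_le_second {n : ℕ} [NeZero n] {W : Matrix (Fin n) (Fin n) ℝ}
    (hW : W.IsHermitian) (j : Fin n)
    (hj : j ≠ Tuple.sort hW.eigenvalues ⟨n - 1, Nat.sub_lt (NeZero.pos n) one_pos⟩) :
    hW.eigenvalues j ≤ ithLargestEigenvalue hW 2 := by
  obtain ⟨i, rfl⟩ := (Tuple.sort hW.eigenvalues).surjective j
  have hi : i.val ≠ n - 1 := fun h => hj (congrArg _ (Fin.ext h))
  refine Tuple.monotone_sort hW.eigenvalues (?_ : i ≤ _)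
  have := i.isLt
  change i.val ≤ (n - 2) % n
  rw [Nat.mod_eq_of_lt (by omega)]
  omega

/-- `W` is symmetric and fixes `𝟙`, so eigenvectors for eigenvalues other than `1` are orthogonal
to `𝟙`. -/
theorem sum_eigenvectorBasis_eq_zero {n : ℕ} {W : Matrix (Fin n) (Fin n) ℝ}
    (hW : W.IsHermitian) (hrow : ∀ i, ∑ j, W i j = 1) (j : Fin n) (hj : hW.eigenvalues j ≠ 1) :
    ∑ i, (hW.eigenvectorBasis j).ofLp i = 0 := by
  have hcol : ∀ l, ∑ i, W i l = 1 := fun l => by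
    rw [← hrow l]
    exact Finset.sum_congr rfl fun i _ => by simpa using (hW.apply i l).symm
  have h := congrArg (fun x => ∑ i, x i) (hW.mulVec_eigenvectorBasis j)
  simp only [Matrix.mulVec, dotProduct, Pi.smul_apply, smul_eq_mul, ← Finset.mul_sum] at h
  rw [Finset.sum_comm] at h
  simp only [← Finset.sum_mul, hcol, one_mul] at h
  have h' : (1 - hW.eigenvalues j) * ∑ i, (hW.eigenvectorBasis j).ofLp i = 0 := by
    linear_combination h
  exact (mul_eq_zero.1 h').resolve_left (sub_ne_zero.2 hj.symm)

/-- `I - A_n` subtracts the mean of the coordinates. -/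
theorem projMean_mulVec {n : ℕ} (x : Fin n → ℝ) :
    ((1 : Matrix (Fin n) (Fin n) ℝ) - (n : ℝ)⁻¹ • Matrix.of (fun _ _ => (1 : ℝ))).mulVec x
      = fun i => x i - (n : ℝ)⁻¹ * ∑ l, x l := by
  ext i
  rw [Matrix.sub_mulVec, Matrix.one_mulVec, Matrix.smul_mulVec]
  simp [Matrix.mulVec, dotProduct]

/-- If `𝟙` is orthogonal to every basis vector but `v i₀`, then `v i₀` is constant. -/
theorem eigenvectorBasis_const {n : ℕ} [NeZero n] (v : OrthonormalBasis (Fin n) ℝ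
    (EuclideanSpace ℝ (Fin n))) (i₀ : Fin n) (h : ∀ j ≠ i₀, ∑ i, (v j).ofLp i = 0) :
    ∃ c : ℝ, ∀ i, (v i₀).ofLp i = c := by
  have h1 := v.sum_repr' (WithLp.toLp 2 (fun _ => (1 : ℝ)))
  rw [Finset.sum_eq_single i₀ (fun j _ hj => by
    simp [PiLp.inner_apply, h j hj]) (by simp)] at h1
  set c := inner ℝ (v i₀) (WithLp.toLp 2 (fun _ => (1 : ℝ)))
  have h2 : ∀ i, c * (v i₀).ofLp i = 1 := fun i => by
    simpa using congrArg (fun x : EuclideanSpace ℝ (Fin n) => x.ofLp i) h1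
  exact ⟨c⁻¹, fun i => eq_inv_of_mul_eq_one_right (h2 i)⟩

theorem pow_mulVec_eigenvectorBasis {n : ℕ} {W : Matrix (Fin n) (Fin n) ℝ}
    (hW : W.IsHermitian) (j : Fin n) (m : ℕ) :
    (W ^ m).mulVec (hW.eigenvectorBasis j).ofLp
      = hW.eigenvalues j ^ m • (hW.eigenvectorBasis j).ofLp := by
  induction m with
  | zero => simp
  | succ m ih =>
    rw [pow_succ, ← Matrix.mulVec_mulVec, hW.mulVec_eigenvectorBasis, Matrix.mulVec_smul, ih,
      smul_smul, pow_succ, mul_comm]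

/-- if `W` is symmetric doubly stochastic PSD with `λ₂(W) < 1` and
`A_n = (1/n)·𝟙𝟙ᵀ`, then
`∑_{t<T} ‖∑_{s≤t} M_s (I - A_n) W^{t-s}‖_F² ≤ (1/(1-λ₂(W))²) ∑_{t<T} ‖M_t‖_F²`. -/
theorem sum_frobSq_proj_bound {N n T : ℕ} [NeZero n]
    (W : Matrix (Fin n) (Fin n) ℝ) (hW : W.IsHermitian)
    (hnonneg : ∀ i j, 0 ≤ W i j) (hrow : ∀ i, ∑ j, W i j = 1)
    (hpsd : W.PosSemidef) (hlam2 : ithLargestEigenvalue hW 2 < 1)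
    (M : ℕ → Matrix (Fin N) (Fin n) ℝ) :
    ∑ t ∈ Finset.range T,
        frobSq (∑ s ∈ Finset.range (t + 1),
          M s * ((1 : Matrix (Fin n) (Fin n) ℝ)
            - (n : ℝ)⁻¹ • Matrix.of (fun _ _ => (1 : ℝ))) * W ^ (t - s))
      ≤ (1 / (1 - ithLargestEigenvalue hW 2) ^ 2) * ∑ t ∈ Finset.range T, frobSq (M t) := by
  set i₀ := Tuple.sort hW.eigenvalues ⟨n - 1, Nat.sub_lt (NeZero.pos n) one_pos⟩
  set P := (1 : Matrix (Fin n) (Fin n) ℝ) - (n : ℝ)⁻¹ • Matrix.of (fun _ _ => (1 : ℝ)) with hP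
  set lam := ithLargestEigenvalue hW 2
  have hn : (n : ℝ) ≠ 0 := NeZero.ne _
  have hle : ∀ j ≠ i₀, hW.eigenvalues j ≤ lam := fun j hj => eigenvalues_le_second hW j hj
  have hzero : ∀ j ≠ i₀, ∑ i, (hW.eigenvectorBasis j).ofLp i = 0 := fun j hj =>
    sum_eigenvectorBasis_eq_zero hW hrow j ((hle j hj).trans_lt hlam2).ne
  have hPfix : ∀ j ≠ i₀, P.mulVec (hW.eigenvectorBasis j).ofLp = (hW.eigenvectorBasis j).ofLp :=
    fun j hj => by
      rw [hP, projMean_mulVec, hzero j hj]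
      simp
  have hPtop : P.mulVec (hW.eigenvectorBasis i₀).ofLp = 0 := by
    obtain ⟨c, hc⟩ := eigenvectorBasis_const hW.eigenvectorBasis i₀ hzero
    rw [hP, projMean_mulVec]
    ext i
    simp [hc, hn]
  have hcoord : ∀ t k j, (∑ s ∈ Finset.range (t + 1), M s * P * W ^ (t - s)).mulVec
      (hW.eigenvectorBasis j).ofLp k = ∑ s ∈ Finset.range (t + 1),
        (M s).mulVec (P.mulVec (hW.eigenvectorBasis j).ofLp) k * hW.eigenvalues j ^ (t - s) := by
    intro t k j
    rw [Matrix.sum_mulVec, Finset.sum_apply]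
    refine Finset.sum_congr rfl fun s _ => ?_
    rw [← Matrix.mulVec_mulVec, pow_mulVec_eigenvectorBasis, Matrix.mulVec_smul,
      ← Matrix.mulVec_mulVec, Pi.smul_apply, smul_eq_mul, mul_comm]
  have hpos : 0 < 1 - lam := sub_pos.2 hlam2
  rw [one_div, ← div_eq_inv_mul, le_div_iff₀ (by positivity), mul_comm]
  simp only [frobSq_eq_sum_eigenvectorBasis hW, hcoord]
  rw [Finset.sum_comm, Finset.sum_comm (s := Finset.range T), Finset.mul_sum]
  refine Finset.sum_le_sum fun k _ => ?_
  rw [Finset.sum_comm, Finset.sum_comm (s := Finset.range T), Finset.mul_sum]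
  refine Finset.sum_le_sum fun j _ => ?_
  by_cases hj : j = i₀
  · subst hj
    rw [hPtop]
    simpa using Finset.sum_nonneg fun t _ => sq_nonneg _
  · rw [hPfix j hj]
    refine le_trans ?_ (sum_sq_geom_conv_le (hW.eigenvalues j) (hpsd.eigenvalues_nonneg j)
      ((hle j hj).trans_lt hlam2) (fun s => (M s).mulVec (hW.eigenvectorBasis j).ofLp k) T)
    have := hle j hj
    gcongr
end
end

section
/- Let f_1, …, f_n : ℝ^N → ℝ be differentiable with L-Lipschitz gradients, f = (1/n)·Σ_{i=1}^n f_i, and suppose (1/n)·Σ_{j=1}^n ‖∇f_j(x) − ∇f(x)‖² ≤ ζ² and, for the fixed index i, ‖∇f_i(x) − ∇f(x)‖² ≤ ζ² for all x ∈ ℝ^N. Fix points x^{(1)}, …, x^{(n)} ∈ ℝ^N with average x̄ = (1/n)·Σ_{i=1}^n x^{(i)}, and let g^{(i)} be a random vector with E[g^{(i)}] = ∇f_i(x^{(i)}) and E‖g^{(i)} − ∇f_i(x^{(i)})‖² ≤ σ². Then: E‖g^{(i)}‖² ≤ σ² + 3·L²·‖x̄ − x^{(i)}‖² + 3·ζ²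 + 3·‖∇f(x̄)‖². -/
/-!
Write `m = E g = ∇f_i(x_i)`. The bias–variance identity `E‖g‖² = E‖g - m‖² + ‖m‖²` reduces the claim
to a bound on `‖m‖²`. That follows from `‖a + b + c‖² ≤ 3(‖a‖² + ‖b‖² + ‖c‖²)` applied to
`m = (∇f_i(x_i) - ∇f_i(x̄)) + (∇f_i(x̄) - ∇f(x̄)) + ∇f(x̄)`, whose first two summands are controlled by
the Lipschitz and heterogeneity hypotheses respectively.

Integrability of `g` and `‖g‖²` is not assumed. Where it fails, the Bochner integral takes the value
`0`, and the bound `E‖g‖² ≤ E‖g - m‖² + ‖m‖²` still holds (see `integral_norm_sq_le`).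
-/

open MeasureTheory

noncomputable section

theorem norm_add_three_sq_le {E : Type*} [SeminormedAddCommGroup E] (a b c : E) :
    ‖a + b + c‖ ^ 2 ≤ 3 * (‖a‖ ^ 2 + ‖b‖ ^ 2 + ‖c‖ ^ 2) := by
  have h : ‖a + b + c‖ ^ 2 ≤ (‖a‖ + ‖b‖ + ‖c‖) ^ 2 :=
    pow_le_pow_left₀ (norm_nonneg _) (norm_add₃_le) 2
  nlinarith [sq_nonneg (‖a‖ - ‖b‖), sq_nonneg (‖a‖ - ‖c‖), sq_nonneg (‖b‖ - ‖c‖)]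

/-- One half of the bias–variance identity, valid without integrability hypotheses: if `g` is not
integrable then `m = 0` and the two second moments coincide; if only `‖g‖²` is not integrable then
the left-hand side is `0`. -/
theorem integral_norm_sq_le {E Ω : Type*} [NormedAddCommGroup E] [InnerProductSpace ℝ E]
    [CompleteSpace E] [MeasurableSpace Ω] (μ : Measure Ω) [IsProbabilityMeasure μ]
    (g : Ω → E) (m : E) (hm : ∫ ω, g ω ∂μ = m) :
    ∫ ω, ‖g ω‖ ^ 2 ∂μ ≤ ∫ ω, ‖g ω - m‖ ^ 2 ∂μ + ‖m‖ ^ 2 := by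
  by_cases hg : Integrable g μ
  · by_cases hg2 : Integrable (fun ω => ‖g ω‖ ^ 2) μ
    · have hin : Integrable (fun ω => 2 * inner ℝ m (g ω)) μ := (hg.const_inner m).const_mul 2
      have hexp : ∫ ω, ‖g ω - m‖ ^ 2 ∂μ
          = ∫ ω, (‖g ω‖ ^ 2 - 2 * inner ℝ m (g ω) + ‖m‖ ^ 2) ∂μ := by
        congr 1
        ext ω
        rw [norm_sub_sq_real, real_inner_comm]
      have hdiff : Integrable (fun ω => ‖g ω‖ ^ 2 - 2 * inner ℝ m (g ω)) μ := hg2.sub hin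
      rw [hexp, integral_add hdiff (integrable_const _), integral_sub hg2 hin,
        integral_const_mul, integral_inner hg, hm, real_inner_self_eq_norm_sq]
      simp only [integral_const, probReal_univ, one_smul]
      linarith
    · rw [integral_undef hg2]
      positivity
  · rw [integral_undef hg] at hm
    subst hm
    simp

/-- bound on the second moment of a single stochastic gradient. -/
theorem single_stochastic_gradient_bound {N n : ℕ} [NeZero n]
    {Ω : Type*} [MeasureSpace Ω] [IsProbabilityMeasure (volume : Measure Ω)]
    (L σ ζ : ℝ)
    (f : Fin n → EuclideanSpace ℝ (Fin N) → ℝ)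
    (hdiff : ∀ j, Differentiable ℝ (f j))
    (hlip : ∀ j x y, ‖gradient (f j) x - gradient (f j) y‖ ≤ L * ‖x - y‖)
    (i : Fin n)
    (houter : ∀ x : EuclideanSpace ℝ (Fin N),
      (n : ℝ)⁻¹ * ∑ j, ‖gradient (f j) x
          - gradient (fun y => (n : ℝ)⁻¹ * ∑ l, f l y) x‖ ^ 2 ≤ ζ ^ 2)
    (houteri : ∀ x : EuclideanSpace ℝ (Fin N),
      ‖gradient (f i) x - gradient (fun y => (n : ℝ)⁻¹ * ∑ l, f l y) x‖ ^ 2 ≤ ζ ^ 2)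
    (x : Fin n → EuclideanSpace ℝ (Fin N))
    (g : Ω → EuclideanSpace ℝ (Fin N))
    (hmean : (∫ ω, g ω) = gradient (f i) (x i))
    (hvar : (∫ ω, ‖g ω - gradient (f i) (x i)‖ ^ 2) ≤ σ ^ 2) :
    (∫ ω, ‖g ω‖ ^ 2)
      ≤ σ ^ 2 + 3 * L ^ 2 * ‖(n : ℝ)⁻¹ • (∑ j, x j) - x i‖ ^ 2 + 3 * ζ ^ 2
        + 3 * ‖gradient (fun y => (n : ℝ)⁻¹ * ∑ l, f l y) ((n : ℝ)⁻¹ • ∑ j, x j)‖ ^ 2 := by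
  have hbv := integral_norm_sq_le volume g _ hmean
  set xb := (n : ℝ)⁻¹ • ∑ j, x j
  set G := gradient (fun y => (n : ℝ)⁻¹ * ∑ l, f l y) xb
  have h3 := norm_add_three_sq_le (gradient (f i) (x i) - gradient (f i) xb)
    (gradient (f i) xb - G) G
  rw [sub_add_sub_cancel, sub_add_cancel] at h3
  have hL := pow_le_pow_left₀ (norm_nonneg _) (hlip i (x i) xb) 2
  rw [mul_pow, norm_sub_rev (x i)] at hL
  have hz : ‖gradient (f i) xb - G‖ ^ 2 ≤ ζ ^ 2 := houteri xb
  linarith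
end
end
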